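/- Let K ≥ 2 be an integer and A,B integers with (A,B) not both ≡ 0 mod K, and let μ ∈ ℂ with Im μ > 0. For all γ, z₁, z₂ ∈ ℂ such that θ_{[00]} does not vanish at z₁−z₂, z₂−γ, z₁−γ, γ−z₂ and γ−z₁, θ_{[AB]}(z₁−z₂;μ) ≠ 0, θ_{[AB]}(0;μ) ≠ 0 and θ_{[−A,−B]}(0;μ) ≠ 0, the following identity holds: w_{AB}(z₁−z₂;μ)·(ρ(z₂−γ;μ) − ρ(z₁−γ;μ)) = w_{AB}(γ−z₂;μ)·w_{−A,−B}(γ−z₁;μ) − 2πi·Z_{AB}(z₁−z₂;μ). -/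

import Mathlib

open Complex Filter

/-- Theta function with characteristics `p, q`. -/
noncomputable def Theta (p q : ℝ) (γ μ : ℂ) : ℂ :=
  ∑' m : ℤ, Complex.exp ((Real.pi : ℂ) * Complex.I * μ * ((m : ℂ) + (p : ℂ))^2
    + 2 * (Real.pi : ℂ) * Complex.I * ((m : ℂ) + (p : ℂ)) * (γ + (q : ℂ)))

/-- The Jacobi theta function `θ₁`. -/
noncomputable def theta1 (γ μ : ℂ) : ℂ := -Theta (1/2) (1/2) γ μ

/-- Logarithmic derivative of `θ₁` in the first argument. -/
noncomputable def rho (γ μ : ℂ) : ℂ := deriv (fun z => theta1 z μ) γ / theta1 γ μ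

/-- `θ_{[AB]}`, theta with characteristics `A/K - 1/2`, `1/2 - B/K`. -/
noncomputable def thetaAB (K : ℕ) (A B : ℤ) (γ μ : ℂ) : ℂ :=
  Theta ((A : ℝ)/(K : ℝ) - 1/2) (1/2 - (B : ℝ)/(K : ℝ)) γ μ

/-- The coefficients `w_{AB}` of the elliptic r-matrix. -/
noncomputable def wAB (K : ℕ) (A B : ℤ) (γ μ : ℂ) : ℂ :=
  thetaAB K A B γ μ * deriv (fun z => thetaAB K 0 0 z μ) 0
    / (thetaAB K A B 0 μ * thetaAB K 0 0 γ μ)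

/-- The functions `Z_{AB}`. -/
noncomputable def ZAB (K : ℕ) (A B : ℤ) (γ μ : ℂ) : ℂ :=
  wAB K A B γ μ / (2 * (Real.pi : ℂ) * Complex.I) *
    (deriv (fun z => thetaAB K A B z μ) γ / thetaAB K A B γ μ
      - deriv (fun z => thetaAB K A B z μ) 0 / thetaAB K A B 0 μ)

/-- `ε = exp(2πi/K)`. -/
noncomputable def epsK (K : ℕ) : ℂ := Complex.exp (2 * (Real.pi : ℂ) * Complex.I / (K : ℂ))

/-- The diagonal matrix `F = diag(1, ε, …, ε^{K-1})`. -/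
noncomputable def Fmat (K : ℕ) : Matrix (Fin K) (Fin K) ℂ :=
  Matrix.diagonal (fun i => epsK K ^ (i : ℕ))

/-- The cyclic permutation matrix `H`. -/
def Hmat (K : ℕ) : Matrix (Fin K) (Fin K) ℂ :=
  Matrix.of fun i j => if (j : ℕ) = ((i : ℕ) + 1) % K then 1 else 0

/-- `σ_{AB} = H^A F^B` (indices taken mod `K`, using `H^K = F^K = 1`). -/
noncomputable def sigmaAB (K : ℕ) (A B : ℤ) : Matrix (Fin K) (Fin K) ℂ :=
  Hmat K ^ ((A % (K : ℤ)).toNat) * Fmat K ^ ((B % (K : ℤ)).toNat)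

/-- The dual basis `σ^{AB} = (ε^{-AB}/K)·σ_{-A,-B}`. -/
noncomputable def sigmaDualAB (K : ℕ) (A B : ℤ) : Matrix (Fin K) (Fin K) ℂ :=
  (epsK K ^ (-(A * B)) / (K : ℂ)) • sigmaAB K (-A) (-B)

open Kronecker in
/-- The elliptic r-matrix. -/
noncomputable def rmat (K : ℕ) (γ μ : ℂ) : Matrix (Fin K × Fin K) (Fin K × Fin K) ℂ :=
  ∑ A ∈ Finset.range K, ∑ B ∈ Finset.range K,
    if A = 0 ∧ B = 0 then 0
    else wAB K A B γ μ • (sigmaAB K A B ⊗ₖ sigmaDualAB K A B)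

/-!
Every `θ_{[AB]}` is an exponential multiple of a translate of `θ₁`, which turns `w_{AB}(x)` into
`exp(2πi(A/K)x) φ(x, u)` with `u = (A/K)μ - B/K` and Kronecker's function
`φ(x, u) = θ₁'(0) θ₁(x + u) / (θ₁(x) θ₁(u))`. The identity is then Fay's
`φ(x, u) φ(y, u) = φ(x + y, u) (ρ(x) + ρ(y) + ρ(u) - ρ(x + y + u))` at `x = γ - z₂`, `y = z₁ - γ`.
Splitting the double series `θ₁(x + y) θ₁(x - y)` by the parity of `m + n` writes this product as an
antisymmetric form in theta functions of `2x` and `2y`; hence Weierstrass' three-term relation,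
and Fay's identity is the derivative of that relation in one variable, at a zero of `θ₁`.
-/

/-- The summands of the series defining `Theta`. -/
noncomputable def ThetaTerm (p q : ℝ) (γ μ : ℂ) (m : ℤ) : ℂ :=
  cexp (Real.pi * I * μ * (m + p) ^ 2 + 2 * Real.pi * I * (m + p) * (γ + q))

lemma ThetaTerm_eq_exp_mul_jacobiTheta₂_term (p q : ℝ) (γ μ : ℂ) (m : ℤ) :
    ThetaTerm p q γ μ m =
      cexp (Real.pi * I * μ * p ^ 2 + 2 * Real.pi * I * p * (γ + q)) *
        jacobiTheta₂_term m (γ + q + p * μ) μ := by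
  rw [ThetaTerm, jacobiTheta₂_term, ← Complex.exp_add]
  congr 1
  ring

lemma Theta_eq_exp_mul_jacobiTheta₂ (p q : ℝ) (γ μ : ℂ) :
    Theta p q γ μ =
      cexp (Real.pi * I * μ * p ^ 2 + 2 * Real.pi * I * p * (γ + q)) *
        jacobiTheta₂ (γ + q + p * μ) μ := by
  rw [jacobiTheta₂, ← tsum_mul_left]
  exact tsum_congr (ThetaTerm_eq_exp_mul_jacobiTheta₂_term p q γ μ)

lemma summable_ThetaTerm (p q : ℝ) (γ : ℂ) {μ : ℂ} (hμ : 0 < μ.im) : Summable (ThetaTerm p q γ μ) :=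
  (((summable_jacobiTheta₂_term_iff _ μ).2 hμ).mul_left _).congr fun m =>
    (ThetaTerm_eq_exp_mul_jacobiTheta₂_term p q γ μ m).symm

lemma differentiable_Theta (p q : ℝ) {μ : ℂ} (hμ : 0 < μ.im) :
    Differentiable ℂ fun γ => Theta p q γ μ := by
  intro γ
  simp only [Theta_eq_exp_mul_jacobiTheta₂]
  exact DifferentiableAt.mul (by fun_prop) <|
    (differentiableAt_jacobiTheta₂_fst (γ + q + p * μ) hμ).comp γ
      (f := fun γ : ℂ => γ + q + p * μ) (by fun_prop)

lemma Theta_add_one_left (p q : ℝ) (γ μ : ℂ) : Theta (p + 1) q γ μ = Theta p q γ μ := by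
  rw [Theta, Theta, ← (Equiv.subRight (1 : ℤ)).tsum_eq]
  refine tsum_congr fun m => congrArg cexp ?_
  simp only [Equiv.subRight_apply]
  push_cast
  ring

lemma Theta_add_one_right (p q : ℝ) (γ μ : ℂ) :
    Theta p (q + 1) γ μ = cexp (2 * Real.pi * I * p) * Theta p q γ μ := by
  rw [Theta, Theta, ← tsum_mul_left]
  refine tsum_congr fun m => ?_
  rw [← one_mul (cexp (2 * Real.pi * I * p) * _), ← exp_int_mul_two_pi_mul_I m]
  simp only [← Complex.exp_add]
  congr 1
  push_cast
  ring

lemma Theta_half_add_one_right (q : ℝ) (γ μ : ℂ) :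
    Theta (1 / 2) (q + 1) γ μ = -Theta (1 / 2) q γ μ := by
  have hexp : 2 * Real.pi * I * (1 / 2 : ℝ) = Real.pi * I := by
    push_cast
    ring
  rw [Theta_add_one_right, hexp, exp_pi_mul_I, neg_one_mul]

lemma Theta_neg (p q : ℝ) (γ μ : ℂ) : Theta p q (-γ) μ = Theta (-p) (-q) γ μ := by
  rw [Theta, Theta, ← (Equiv.neg ℤ).tsum_eq]
  refine tsum_congr fun m => congrArg cexp ?_
  simp only [Equiv.neg_apply]
  push_cast
  ring

lemma Theta_add_add (p q a b : ℝ) (γ μ : ℂ) :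
    Theta (p + a) (q + b) γ μ =
      cexp (Real.pi * I * μ * a ^ 2 + 2 * Real.pi * I * a * (q + b)) *
        (cexp (2 * Real.pi * I * a * γ) * Theta p q (γ + (a * μ + b)) μ) := by
  rw [Theta, Theta, ← tsum_mul_left, ← tsum_mul_left]
  refine tsum_congr fun m => ?_
  simp only [← Complex.exp_add]
  congr 1
  push_cast
  ring

/-- The decomposition of `ℤ × ℤ` by the parity of the sum of the coordinates: the pairs with even
sum are the `(k + l, k - l)`, those with odd sum the `(k + l + 1, k - l)`. -/
noncomputable def sumDiffEquiv : (ℤ × ℤ) ⊕ (ℤ × ℤ) ≃ ℤ × ℤ :=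
  Equiv.ofBijective
    (Sum.elim (fun k => (k.1 + k.2, k.1 - k.2)) fun k => (k.1 + k.2 + 1, k.1 - k.2)) <| by
    constructor
    · rintro (⟨k, l⟩ | ⟨k, l⟩) (⟨k', l'⟩ | ⟨k', l'⟩) h <;>
        simp only [Sum.elim_inl, Sum.elim_inr, Prod.mk.injEq, Sum.inl.injEq, Sum.inr.injEq,
          reduceCtorEq] at h ⊢ <;>
        omega
    · rintro ⟨m, n⟩
      obtain ⟨k, hk | hk⟩ := Int.even_or_odd' (m + n)
      · exact ⟨Sum.inl (k, m - k), Prod.ext (by simp) (by simp; omega)⟩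
      · exact ⟨Sum.inr (k, m - k - 1), Prod.ext (by simp; omega) (by simp; omega)⟩

lemma sumDiffEquiv_inl (k : ℤ × ℤ) : sumDiffEquiv (Sum.inl k) = (k.1 + k.2, k.1 - k.2) := rfl

lemma sumDiffEquiv_inr (k : ℤ × ℤ) : sumDiffEquiv (Sum.inr k) = (k.1 + k.2 + 1, k.1 - k.2) := rfl

lemma hasSum_ThetaTerm_mul (p q p' q' : ℝ) (x y : ℂ) {μ ν : ℂ} (hμ : 0 < μ.im)
    (hν : 0 < ν.im) :
    HasSum (fun k : ℤ × ℤ => ThetaTerm p q x μ k.1 * ThetaTerm p' q' y ν k.2)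
      (Theta p q x μ * Theta p' q' y ν) :=
  have hx := summable_ThetaTerm p q x hμ
  have hy := summable_ThetaTerm p' q' y hν
  hx.hasSum.mul hy.hasSum (summable_mul_of_summable_norm hx.norm hy.norm)

theorem Theta_add_mul_Theta_sub (p q p' q' : ℝ) (x y : ℂ) {μ : ℂ} (hμ : 0 < μ.im) :
    Theta p q (x + y) μ * Theta p' q' (x - y) μ =
      Theta ((p + p') / 2) (q + q') (2 * x) (2 * μ) *
          Theta ((p - p') / 2) (q - q') (2 * y) (2 * μ) +
        Theta ((p + p' + 1) / 2) (q + q') (2 * x) (2 * μ) *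
          Theta ((p - p' + 1) / 2) (q - q') (2 * y) (2 * μ) := by
  have h2μ : 0 < (2 * μ).im := by simpa using hμ
  refine (sumDiffEquiv.hasSum_iff.2 (hasSum_ThetaTerm_mul p q p' q' (x + y) (x - y) hμ hμ)).unique
    (HasSum.sum ?_ ?_)
  all_goals
    refine (hasSum_ThetaTerm_mul _ _ _ _ (2 * x) (2 * y) h2μ h2μ).congr_fun fun k => ?_
    simp only [Function.comp_apply, sumDiffEquiv_inl, sumDiffEquiv_inr, ThetaTerm,
      ← Complex.exp_add]
    congr 1
    push_cast
    ring

lemma differentiable_theta1 {μ : ℂ} (hμ : 0 < μ.im) : Differentiable ℂ fun x => theta1 x μ :=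
  (differentiable_Theta (1 / 2) (1 / 2) hμ).neg

lemma theta1_neg (x μ : ℂ) : theta1 (-x) μ = -theta1 x μ := by
  have hp := Theta_add_one_left (-(1 / 2)) (-(1 / 2)) x μ
  have hq := Theta_half_add_one_right (-(1 / 2)) x μ
  norm_num only at hp hq
  rw [theta1, theta1, Theta_neg, hq, neg_neg]
  norm_num only [hp]

lemma theta1_zero (μ : ℂ) : theta1 0 μ = 0 := by
  have h := theta1_neg 0 μ
  rwa [neg_zero, self_eq_neg] at h

lemma deriv_theta1_neg (x μ : ℂ) :
    deriv (fun z => theta1 z μ) (-x) = deriv (fun z => theta1 z μ) x := by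
  have h := deriv_comp_neg (fun z => theta1 z μ) x
  simp only [theta1_neg, deriv.fun_neg] at h
  exact (neg_injective h).symm

lemma rho_neg (x μ : ℂ) : rho (-x) μ = -rho x μ := by
  rw [rho, rho, deriv_theta1_neg, theta1_neg, div_neg]

theorem theta1_add_mul_theta1_sub (x y : ℂ) {μ : ℂ} (hμ : 0 < μ.im) :
    theta1 (x + y) μ * theta1 (x - y) μ =
      Theta 0 0 (2 * x) (2 * μ) * Theta (1 / 2) 0 (2 * y) (2 * μ) -
        Theta (1 / 2) 0 (2 * x) (2 * μ) * Theta 0 0 (2 * y) (2 * μ) := by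
  have hadd := Theta_add_mul_Theta_sub (1 / 2) (1 / 2) (1 / 2) (1 / 2) x y hμ
  have hhalf : Theta (1 / 2) 1 (2 * x) (2 * μ) = -Theta (1 / 2) 0 (2 * x) (2 * μ) := by
    simpa only [zero_add] using Theta_half_add_one_right 0 (2 * x) (2 * μ)
  have hone : Theta 1 1 (2 * x) (2 * μ) = Theta 0 0 (2 * x) (2 * μ) := by
    simpa using (Theta_add_one_left 0 (0 + 1) (2 * x) (2 * μ)).trans (Theta_add_one_right _ _ _ _)
  norm_num only [hhalf, hone] at hadd
  rw [theta1, theta1, neg_mul_neg]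
  norm_num only
  linear_combination hadd

theorem theta1_weierstrass (a b c d : ℂ) {μ : ℂ} (hμ : 0 < μ.im) :
    theta1 (a + b) μ * theta1 (a - b) μ * (theta1 (c + d) μ * theta1 (c - d) μ) -
        theta1 (a + c) μ * theta1 (a - c) μ * (theta1 (b + d) μ * theta1 (b - d) μ) +
      theta1 (a + d) μ * theta1 (a - d) μ * (theta1 (b + c) μ * theta1 (b - c) μ) = 0 := by
  simp only [theta1_add_mul_theta1_sub _ _ hμ]
  ring

lemma theta1_weierstrass_shifted (x y u t : ℂ) {μ : ℂ} (hμ : 0 < μ.im) :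
    theta1 (x + y) μ * theta1 (x + u) μ * (theta1 (t - (y + u)) μ * theta1 t μ) -
        theta1 (x + t) μ * theta1 (x + y + u - t) μ * (theta1 (-u) μ * theta1 y μ) +
      theta1 x μ * theta1 (x + y + u) μ * (theta1 (t - u) μ * theta1 (y - t) μ) = 0 := by
  have h := theta1_weierstrass (x + (y + u) / 2) ((y - u) / 2) (t - (y + u) / 2) (-(y + u) / 2) hμ
  ring_nf at h ⊢
  exact h

theorem theta1_fay (x y u : ℂ) {μ : ℂ} (hμ : 0 < μ.im) :
    deriv (fun z => theta1 z μ) 0 * theta1 (x + y) μ * theta1 (x + u) μ * theta1 (y + u) μ =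
      (deriv (fun z => theta1 z μ) x * theta1 y μ * theta1 u μ +
            theta1 x μ * deriv (fun z => theta1 z μ) y * theta1 u μ +
          theta1 x μ * theta1 y μ * deriv (fun z => theta1 z μ) u) * theta1 (x + y + u) μ -
        theta1 x μ * theta1 y μ * theta1 u μ * deriv (fun z => theta1 z μ) (x + y + u) := by
  have hθ (s : ℂ) := (differentiable_theta1 hμ s).hasDerivAt
  have hsub (c : ℂ) := (hθ (0 - c)).comp_sub_const 0 c
  have hadd (c : ℂ) := (hθ (c + 0)).comp_const_add c 0
  have hrev (c : ℂ) := (hθ (c - 0)).comp_const_sub c 0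
  have hderiv :=
    ((((hsub (y + u)).mul (hθ 0)).const_mul (theta1 (x + y) μ * theta1 (x + u) μ)).sub
      (((hadd x).mul (hrev (x + y + u))).mul_const (theta1 (-u) μ * theta1 y μ))).add
      (((hsub u).mul (hrev y)).const_mul (theta1 x μ * theta1 (x + y + u) μ))
  have hzero := hderiv.unique <| (hasDerivAt_const (0 : ℂ) (0 : ℂ)).congr_of_eventuallyEq <|
    .of_forall fun t => theta1_weierstrass_shifted x y u t hμ
  simp only [zero_sub, add_zero, sub_zero, theta1_zero, theta1_neg, deriv_theta1_neg] at hzero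
  linear_combination -hzero

/-- Kronecker's elliptic function `φ(x, u) = θ₁'(0) θ₁(x + u) / (θ₁(x) θ₁(u))`. -/
noncomputable def kroneckerPhi (x u μ : ℂ) : ℂ :=
  deriv (fun z => theta1 z μ) 0 * theta1 (x + u) μ / (theta1 x μ * theta1 u μ)

lemma kroneckerPhi_neg_neg (x u μ : ℂ) : kroneckerPhi (-x) (-u) μ = -kroneckerPhi x u μ := by
  rw [kroneckerPhi, kroneckerPhi, ← neg_add]
  simp only [theta1_neg]
  ring

theorem kroneckerPhi_mul_kroneckerPhi {x y u μ : ℂ} (hμ : 0 < μ.im)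
    (hx : theta1 x μ ≠ 0) (hy : theta1 y μ ≠ 0) (hu : theta1 u μ ≠ 0)
    (hxy : theta1 (x + y) μ ≠ 0) (hxyu : theta1 (x + y + u) μ ≠ 0) :
    kroneckerPhi x u μ * kroneckerPhi y u μ =
      kroneckerPhi (x + y) u μ * (rho x μ + rho y μ + rho u μ - rho (x + y + u) μ) := by
  have hfay := theta1_fay x y u hμ
  simp only [kroneckerPhi, rho]
  field_simp
  linear_combination deriv (fun z => theta1 z μ) 0 * hfay

/-- The function `θ_{[AB]}` with arbitrary real numbers `p`, `q` in place of `A / K`, `B / K`. -/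
noncomputable def thetaChar (p q : ℝ) (γ μ : ℂ) : ℂ := Theta (p - 1 / 2) (1 / 2 - q) γ μ

/-- The function `w_{AB}` with arbitrary real numbers `p`, `q` in place of `A / K`, `B / K`. -/
noncomputable def wChar (p q : ℝ) (γ μ : ℂ) : ℂ :=
  thetaChar p q γ μ * deriv (fun z => thetaChar 0 0 z μ) 0 /
    (thetaChar p q 0 μ * thetaChar 0 0 γ μ)

/-- The function `Z_{AB}` with arbitrary real numbers `p`, `q` in place of `A / K`, `B / K`. -/
noncomputable def ZChar (p q : ℝ) (γ μ : ℂ) : ℂ :=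
  wChar p q γ μ / (2 * Real.pi * I) *
    (deriv (fun z => thetaChar p q z μ) γ / thetaChar p q γ μ -
      deriv (fun z => thetaChar p q z μ) 0 / thetaChar p q 0 μ)

lemma thetaAB_eq_thetaChar (K : ℕ) (A B : ℤ) : thetaAB K A B = thetaChar (A / K) (B / K) := rfl

lemma thetaAB_zero_zero (K : ℕ) : thetaAB K 0 0 = thetaChar 0 0 := by
  simp [thetaAB_eq_thetaChar]

lemma wAB_eq_wChar (K : ℕ) (A B : ℤ) : wAB K A B = wChar (A / K) (B / K) := by
  funext γ μ
  rw [wAB, thetaAB_zero_zero, thetaAB_eq_thetaChar, wChar]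

lemma ZAB_eq_ZChar (K : ℕ) (A B : ℤ) : ZAB K A B = ZChar (A / K) (B / K) := by
  funext γ μ
  rw [ZAB, wAB_eq_wChar, thetaAB_eq_thetaChar, ZChar]

lemma thetaChar_zero_zero (x μ : ℂ) : thetaChar 0 0 x μ = -theta1 x μ := by
  rw [thetaChar, theta1, neg_neg, ← Theta_add_one_left]
  norm_num

lemma thetaChar_eq_exp_mul_theta1 (p q : ℝ) (x μ : ℂ) :
    thetaChar p q x μ =
      -cexp (Real.pi * I * μ * p ^ 2 + 2 * Real.pi * I * p * (1 / 2 - q)) *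
        (cexp (2 * Real.pi * I * p * x) * theta1 (x + (p * μ - q)) μ) := by
  have h := Theta_add_add (-(1 / 2)) (1 / 2) p (-q) x μ
  have hθ := thetaChar_zero_zero (x + (p * μ - q)) μ
  rw [thetaChar, zero_sub, sub_zero] at hθ
  push_cast [← sub_eq_add_neg, neg_add_eq_sub] at h
  rw [thetaChar, h, hθ, mul_neg, mul_neg, neg_mul]

lemma theta1_ne_zero_of_thetaChar_ne_zero {p q : ℝ} {x μ : ℂ} (h : thetaChar p q x μ ≠ 0) :
    theta1 (x + (p * μ - q)) μ ≠ 0 := by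
  rw [thetaChar_eq_exp_mul_theta1] at h
  exact right_ne_zero_of_mul (right_ne_zero_of_mul h)

lemma deriv_thetaChar_div_thetaChar {p q : ℝ} {x μ : ℂ} (hμ : 0 < μ.im)
    (h : thetaChar p q x μ ≠ 0) :
    deriv (fun z => thetaChar p q z μ) x / thetaChar p q x μ =
      2 * Real.pi * I * p + rho (x + (p * μ - q)) μ := by
  have hθ : DifferentiableAt ℂ (fun z => theta1 (z + (p * μ - q)) μ) x :=
    (differentiable_theta1 hμ _).comp x (differentiableAt_id.add_const _)
  have hmul := logDeriv_mul (f := fun z => cexp (2 * Real.pi * I * p * z)) x (exp_ne_zero _)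
    (g := fun z => theta1 (z + (p * μ - q)) μ) (theta1_ne_zero_of_thetaChar_ne_zero h)
    (by fun_prop) hθ
  rw [← logDeriv_apply (fun z => thetaChar p q z μ)]
  simp only [thetaChar_eq_exp_mul_theta1]
  rw [logDeriv_const_mul x _ (neg_ne_zero.2 (exp_ne_zero _)), hmul]
  congr 1
  · rw [logDeriv_apply, deriv_cexp (by fun_prop), deriv_const_mul_id',
      mul_div_cancel_left₀ _ (exp_ne_zero _)]
  · rw [logDeriv_apply, rho, deriv_comp_add_const (fun z => theta1 z μ)]

lemma wChar_eq_exp_mul_kroneckerPhi (p q : ℝ) (x μ : ℂ) :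
    wChar p q x μ = cexp (2 * Real.pi * I * p * x) * kroneckerPhi x (p * μ - q) μ := by
  simp only [wChar, kroneckerPhi, thetaChar_zero_zero, deriv.fun_neg]
  simp only [thetaChar_eq_exp_mul_theta1, mul_zero, exp_zero, zero_add, one_mul]
  field_simp

lemma two_pi_I_mul_ZChar {p q : ℝ} {x μ : ℂ} (hμ : 0 < μ.im)
    (hx : thetaChar p q x μ ≠ 0) (h0 : thetaChar p q 0 μ ≠ 0) :
    2 * Real.pi * I * ZChar p q x μ =
      wChar p q x μ * (rho (x + (p * μ - q)) μ - rho (p * μ - q) μ) := by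
  rw [ZChar, deriv_thetaChar_div_thetaChar hμ hx, deriv_thetaChar_div_thetaChar hμ h0, zero_add,
    add_sub_add_left_eq_sub, ← mul_assoc, mul_div_cancel₀ _ two_pi_I_ne_zero]

lemma wChar_neg_neg (p q : ℝ) (x μ : ℂ) : wChar (-p) (-q) (-x) μ = -wChar p q x μ := by
  have hu : ((-p : ℝ) : ℂ) * μ - (-q : ℝ) = -(p * μ - q) := by
    push_cast
    ring
  have hexp : 2 * Real.pi * I * (-p : ℝ) * -x = 2 * Real.pi * I * p * x := by
    push_cast
    ring
  rw [wChar_eq_exp_mul_kroneckerPhi, wChar_eq_exp_mul_kroneckerPhi, hu, hexp,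
    kroneckerPhi_neg_neg, mul_neg]

theorem wChar_mul_wChar {p q : ℝ} {x y μ : ℂ} (hμ : 0 < μ.im) (hx : theta1 x μ ≠ 0)
    (hy : theta1 y μ ≠ 0) (hxy : theta1 (x + y) μ ≠ 0) (hpq : thetaChar p q (x + y) μ ≠ 0)
    (hpq0 : thetaChar p q 0 μ ≠ 0) :
    wChar p q x μ * wChar p q y μ =
      wChar p q (x + y) μ *
        (rho x μ + rho y μ + rho (p * μ - q) μ - rho (x + y + (p * μ - q)) μ) := by
  have hu : theta1 (p * μ - q) μ ≠ 0 := by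
    simpa only [zero_add] using theta1_ne_zero_of_thetaChar_ne_zero hpq0
  have hphi := kroneckerPhi_mul_kroneckerPhi hμ hx hy hu hxy
    (theta1_ne_zero_of_thetaChar_ne_zero hpq)
  simp only [wChar_eq_exp_mul_kroneckerPhi, mul_add (2 * Real.pi * I * p), Complex.exp_add]
  rw [mul_mul_mul_comm, hphi]
  ring

theorem wAB_rho_ZAB_identity2_general (p q : ℝ) (μ : ℂ) (hμ : 0 < μ.im) (γ z₁ z₂ : ℂ)
    (h₁₂ : thetaChar 0 0 (z₁ - z₂) μ ≠ 0) (h₂ : thetaChar 0 0 (z₂ - γ) μ ≠ 0)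
    (h₁ : thetaChar 0 0 (z₁ - γ) μ ≠ 0) (hpq : thetaChar p q (z₁ - z₂) μ ≠ 0)
    (hpq0 : thetaChar p q 0 μ ≠ 0) :
    wChar p q (z₁ - z₂) μ * (rho (z₂ - γ) μ - rho (z₁ - γ) μ) =
      wChar p q (γ - z₂) μ * wChar (-p) (-q) (γ - z₁) μ -
        2 * Real.pi * I * ZChar p q (z₁ - z₂) μ := by
  rw [thetaChar_zero_zero, neg_ne_zero] at h₁₂ h₂ h₁
  have hsum : γ - z₂ + (z₁ - γ) = z₁ - z₂ := by ring
  have hx : theta1 (γ - z₂) μ ≠ 0 := by rwa [← neg_sub, theta1_neg, neg_ne_zero]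
  have hmul := wChar_mul_wChar hμ hx h₁ (hsum ▸ h₁₂) (hsum ▸ hpq) hpq0
  rw [hsum] at hmul
  rw [two_pi_I_mul_ZChar hμ hpq hpq0, ← neg_sub z₁ γ, wChar_neg_neg, mul_neg, hmul,
    ← neg_sub γ z₂, rho_neg]
  ring

/-- the identity
`w_{AB}(z₁−z₂)(ρ(z₂−γ) − ρ(z₁−γ)) = w_{AB}(γ−z₂)·w_{−A,−B}(γ−z₁) − 2πi·Z_{AB}(z₁−z₂)`. -/
theorem wAB_rho_ZAB_identity2 (K : ℕ) (hK : 2 ≤ K) (A B : ℤ)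
    (hAB : ¬(A % (K : ℤ) = 0 ∧ B % (K : ℤ) = 0)) (μ : ℂ) (hμ : 0 < μ.im)
    (γ z₁ z₂ : ℂ)
    (h1 : thetaAB K 0 0 (z₁ - z₂) μ ≠ 0) (h2 : thetaAB K 0 0 (z₂ - γ) μ ≠ 0)
    (h3 : thetaAB K 0 0 (z₁ - γ) μ ≠ 0) (h4 : thetaAB K 0 0 (γ - z₂) μ ≠ 0)
    (h5 : thetaAB K 0 0 (γ - z₁) μ ≠ 0)
    (h6 : thetaAB K A B (z₁ - z₂) μ ≠ 0) (h7 : thetaAB K A B 0 μ ≠ 0)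
    (h8 : thetaAB K (-A) (-B) 0 μ ≠ 0) :
    wAB K A B (z₁ - z₂) μ * (rho (z₂ - γ) μ - rho (z₁ - γ) μ)
      = wAB K A B (γ - z₂) μ * wAB K (-A) (-B) (γ - z₁) μ
          - 2 * (Real.pi : ℂ) * Complex.I * ZAB K A B (z₁ - z₂) μ := by
  rw [thetaAB_zero_zero] at h1 h2 h3
  simpa [wAB_eq_wChar, ZAB_eq_ZChar, neg_div] using
    wAB_rho_ZAB_identity2_general (A / K) (B / K) μ hμ γ z₁ z₂ h1 h2 h3 h6 h7
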